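/- Fix constants δ₀, ρ₀ ∈ (0,1) and set α₀ = (1−ρ₀)(1−δ₀)²/ρ₀ and β₀ = (1−ρ₀)(1−δ₀)/ρ₀. Then there exists a constant C > 0 depending only on (δ₀, ρ₀) such that for every n ≥ 2 and every centered Gaussian vector X = (X_1,…,X_n) with var(X_i) = 1 for all i and correlation matrix R satisfying R_{ij} ∈ [0, ρ₀] for all i ≠ j, one has P(max_{1≤i≤n} |X_i| ≤ δ₀ √(2(1−ρ₀)log n)) ≤ C² · n^{−2α₀} · (log n)^{β₀−1}. -/

import Mathlib

open MeasureTheory ProbabilityTheory Real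

/-- `X` is a centered Gaussian random vector with standardized entries and
correlation (= covariance) matrix `R`: every linear combination of the
coordinates is a centered real Gaussian with the corresponding variance,
and `R` has unit diagonal. -/
def IsCenteredGaussianVec {Ω : Type*} [MeasureSpace Ω] {n : ℕ}
    (X : Fin n → Ω → ℝ) (R : Matrix (Fin n) (Fin n) ℝ) : Prop :=
  (∀ i, Measurable (X i)) ∧ (∀ i, R i i = 1) ∧
    ∀ a : Fin n → ℝ,
      Measure.map (fun ω => ∑ i, a i * X i ω) (ℙ : Measure Ω) =
        gaussianReal 0 (Real.toNNReal (∑ i, ∑ j, a i * R i j * a j))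

open MeasureTheory ProbabilityTheory Real

namespace SBall

/-- One dimensional Stein identity. -/
lemma stein1 (φ φ' : ℝ → ℝ) (K K' : ℝ) (hd : ∀ x, HasDerivAt φ (φ' x) x)
    (hb : ∀ x, |φ x| ≤ K) (hb' : ∀ x, |φ' x| ≤ K') (hm : Measurable φ') :
    ∫ x, x * φ x ∂(gaussianReal 0 1) = ∫ x, φ' x ∂(gaussianReal 0 1) := by
  have hφm : Measurable φ :=
    (continuous_iff_continuousAt.2 fun x => (hd x).continuousAt).measurable
  rw [integral_gaussianReal_eq_integral_smul one_ne_zero,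
    integral_gaussianReal_eq_integral_smul one_ne_zero]
  have hp : Integrable (gaussianPDFReal 0 1) := integrable_gaussianPDFReal 0 1
  have hxp : Integrable (fun x => x * gaussianPDFReal 0 1 x) := by
    have := (memLp_id_gaussianReal (μ := 0) (v := 1) 1).integrable (by simp)
    rw [gaussianReal_of_var_ne_zero _ one_ne_zero,
      integrable_withDensity_iff_integrable_smul' (measurable_gaussianPDF _ _)
        (ae_of_all _ fun x => gaussianPDF_lt_top)] at this
    refine this.congr (ae_of_all _ fun x => ?_)
    simp [mul_comm]
  have hpd : ∀ x, HasDerivAt (gaussianPDFReal 0 1) (-x * gaussianPDFReal 0 1 x) x := by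
    intro x
    have h1 : HasDerivAt (fun x : ℝ => -(x - 0)^2/(2*((1:NNReal):ℝ))) (-x) x := by
      have := ((hasDerivAt_id x).pow 2).neg.div_const 2
      have e : (fun x : ℝ => -(x - 0)^2/(2*((1:NNReal):ℝ))) = fun x => (-id ^ 2) x / 2 := by
        funext y; simp
      rw [e]
      exact this.congr_deriv (by simp; ring)
    have h2 := (h1.exp).const_mul (√(2 * π * ((1:NNReal):ℝ)))⁻¹
    have e : gaussianPDFReal 0 1 = fun x => (√(2 * π * ((1:NNReal):ℝ)))⁻¹ *
        rexp (-(x - 0)^2/(2*((1:NNReal):ℝ))) := rfl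
    rw [e]
    exact h2.congr_deriv (by ring)
  have key := integral_mul_deriv_eq_deriv_mul_of_integrable (u := φ) (u' := φ')
    (v := gaussianPDFReal 0 1) (v' := fun x => -x * gaussianPDFReal 0 1 x)
    (fun x _ => hd x) (fun x _ => hpd x) ?_ ?_ ?_
  · calc _ = - ∫ x, φ x * (-x * gaussianPDFReal 0 1 x) := by
          rw [← integral_neg]; congr 1; ext x; simp; ring
      _ = _ := by rw [key, neg_neg]; congr 1; ext x; simp; ring
  · have : Integrable (fun x => φ x * (-(x * gaussianPDFReal 0 1 x))) :=
      hxp.neg.bdd_mul (c := K) hφm.aestronglyMeasurable (ae_of_all _ hb)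
    refine this.congr (ae_of_all _ fun x => ?_)
    simp
  · exact hp.bdd_mul (c := K') hm.aestronglyMeasurable (ae_of_all _ hb')
  · exact hp.bdd_mul (c := K) hφm.aestronglyMeasurable (ae_of_all _ hb)

/-- standard Gaussian product measure -/
noncomputable abbrev gam (ι : Type*) [Fintype ι] : Measure (ι → ℝ) :=
  Measure.pi (fun _ : ι => gaussianReal 0 1)

lemma mp_update {ι : Type*} [Fintype ι] [DecidableEq ι] (k : ι) :
    MeasurePreserving (fun p : (ι → ℝ) × ℝ => Function.update p.1 k p.2)
      ((gam ι).prod (gaussianReal 0 1)) (gam ι) := by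
  have hm : Measurable (fun p : (ι → ℝ) × ℝ => Function.update p.1 k p.2) := by
    apply measurable_pi_lambda
    intro i
    by_cases h : i = k
    · subst h; simpa using measurable_snd
    · have : Measurable (fun c : (ι → ℝ) × ℝ => c.1 i) :=
        (measurable_pi_apply i).comp measurable_fst
      simpa [h] using this
  refine ⟨hm, ?_⟩
  symm
  apply Measure.pi_eq
  intro s hs
  rw [Measure.map_apply hm (MeasurableSet.univ_pi hs)]
  have : (fun p : (ι → ℝ) × ℝ => Function.update p.1 k p.2) ⁻¹' (Set.univ.pi s)
      = (Set.univ.pi (Function.update s k Set.univ)) ×ˢ s k := by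
    ext ⟨x, y⟩
    simp only [Set.mem_preimage, Set.mem_pi, Set.mem_univ, true_imp_iff, Set.mem_prod]
    constructor
    · intro h
      refine ⟨fun i => ?_, by simpa using h k⟩
      by_cases hi : i = k
      · subst hi; simp
      · simpa [hi] using h i
    · rintro ⟨h1, h2⟩ i
      by_cases hi : i = k
      · subst hi; simpa using h2
      · simpa [hi] using h1 i
  rw [this, Measure.prod_prod, Measure.pi_pi, ← Finset.mul_prod_erase _ _ (Finset.mem_univ k),
    ← Finset.mul_prod_erase _ (fun i => gaussianReal 0 1 (s i)) (Finset.mem_univ k)]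
  simp only [Function.update_self, measure_univ, one_mul]
  rw [mul_comm]
  congr 1
  apply Finset.prod_congr rfl
  intro i hi
  rw [Function.update_of_ne (Finset.ne_of_mem_erase hi)]

lemma integrable_coord {ι : Type*} [Fintype ι] (k : ι) :
    Integrable (fun h : ι → ℝ => h k) (gam ι) := by
  have h1 : Integrable (fun x : ℝ => x) (gaussianReal 0 1) :=
    (memLp_id_gaussianReal (μ := 0) (v := 1) 1).integrable (by simp)
  exact (measurePreserving_eval (fun _ : ι => gaussianReal 0 1) k).integrable_comp_of_integrable h1

lemma steinPi {ι : Type*} [Fintype ι] [DecidableEq ι] (k : ι) (Ψ Ψ' : (ι → ℝ) → ℝ) (K K' : ℝ)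
    (hd : ∀ h s, HasDerivAt (fun s => Ψ (Function.update h k s)) (Ψ' (Function.update h k s)) s)
    (hb : ∀ x, |Ψ x| ≤ K) (hb' : ∀ x, |Ψ' x| ≤ K') (hm : Measurable Ψ) (hm' : Measurable Ψ') :
    ∫ h, h k * Ψ h ∂(gam ι) = ∫ h, Ψ' h ∂(gam ι) := by
  have hmp := mp_update k
  have i1 : Integrable (fun h : ι → ℝ => h k * Ψ h) (gam ι) :=
    (integrable_coord k).mul_bdd (c := K) hm.aestronglyMeasurable (ae_of_all _ hb)
  have i2 : Integrable Ψ' (gam ι) :=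
    Integrable.of_bound hm'.aestronglyMeasurable K' (ae_of_all _ hb')
  rw [← hmp.map_eq, integral_map hmp.measurable.aemeasurable
      (by rw [hmp.map_eq]; exact i1.aestronglyMeasurable),
    integral_map hmp.measurable.aemeasurable
      (by rw [hmp.map_eq]; exact i2.aestronglyMeasurable)]
  have j1 : Integrable (fun x : (ι → ℝ) × ℝ => Function.update x.1 k x.2 k *
      Ψ (Function.update x.1 k x.2)) ((gam ι).prod (gaussianReal 0 1)) :=
    hmp.integrable_comp_of_integrable i1
  have j2 : Integrable (fun x : (ι → ℝ) × ℝ => 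
      Ψ' (Function.update x.1 k x.2)) ((gam ι).prod (gaussianReal 0 1)) :=
    hmp.integrable_comp_of_integrable i2
  rw [integral_prod _ j1, integral_prod _ j2]
  congr 1
  ext x
  simp only [Function.update_self]
  apply stein1 _ _ K K' (hd x) (fun s => hb _) (fun s => hb' _)
  exact hm'.comp (measurable_update x)

end SBall

open MeasureTheory ProbabilityTheory Real

set_option linter.unusedSectionVars false

namespace SBall

/-- product function -/
noncomputable def PF {κ : Type*} [Fintype κ] (φ : κ → ℝ → ℝ) (x : κ → ℝ) : ℝ := ∏ j, φ j (x j)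

section
variable {κ ι : Type*} [Fintype κ] [DecidableEq κ] [Fintype ι] [DecidableEq ι]

lemma PF_update (φ : κ → ℝ → ℝ) (i : κ) (ψ : ℝ → ℝ) (x : κ → ℝ) :
    PF (Function.update φ i ψ) x = ψ (x i) * ∏ j ∈ Finset.univ.erase i, φ j (x j) := by
  unfold PF
  rw [← Finset.mul_prod_erase _ _ (Finset.mem_univ i)]
  simp only [Function.update_self]
  congr 1
  apply Finset.prod_congr rfl
  intro j hj
  rw [Function.update_of_ne (Finset.ne_of_mem_erase hj)]

lemma PF_deriv (φ φ' : κ → ℝ → ℝ) (h : ∀ i x, HasDerivAt (φ i) (φ' i x) x)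
    (Z : κ → ℝ → ℝ) (W : κ → ℝ) (s : ℝ) (hZ : ∀ i, HasDerivAt (Z i) (W i) s) :
    HasDerivAt (fun s => PF φ (fun i => Z i s))
      (∑ i, W i * PF (Function.update φ i (φ' i)) (fun i => Z i s)) s := by
  have := HasDerivAt.fun_finsetProd (u := Finset.univ) (f := fun i s => φ i (Z i s))
    (f' := fun i => φ' i (Z i s) * W i) (x := s) (fun i _ => (h i (Z i s)).comp s (hZ i))
  refine this.congr_deriv ?_
  apply Finset.sum_congr rfl
  intro i _
  rw [PF_update]
  simp only [smul_eq_mul]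
  ring

lemma PF_bound (φ : κ → ℝ → ℝ) (K : ℝ) (h : ∀ i x, |φ i x| ≤ K) (x : κ → ℝ) :
    |PF φ x| ≤ K ^ (Fintype.card κ) := by
  unfold PF
  rw [Finset.abs_prod]
  calc _ ≤ ∏ _j : κ, K := Finset.prod_le_prod (fun _ _ => abs_nonneg _) (fun i _ => h i _)
    _ = _ := by simp

lemma PF_cont (φ : κ → ℝ → ℝ) (h : ∀ i, Continuous (φ i)) : Continuous (PF φ) := by
  unfold PF
  fun_prop

/-- linear interpolation map -/
noncomputable def ZZ (c : κ → ι → ℝ) (h : ι → ℝ) (i : κ) : ℝ := ∑ k, c i k * h k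

lemma ZZ_cont (c : κ → ι → ℝ) : Continuous (ZZ c) := by
  unfold ZZ
  fun_prop

lemma ibp (c : κ → ι → ℝ) (φ φ' : κ → ℝ → ℝ) (K : ℝ) 
    (h : ∀ i x, HasDerivAt (φ i) (φ' i x) x) (hc : ∀ i, Continuous (φ i))
    (hc' : ∀ i, Continuous (φ' i)) (hb : ∀ i x, |φ i x| ≤ K) (hb' : ∀ i x, |φ' i x| ≤ K)
    (k : ι) :
    ∫ x, x k * PF φ (ZZ c x) ∂(gam ι) =
      ∑ j, c j k * ∫ x, PF (Function.update φ j (φ' j)) (ZZ c x) ∂(gam ι) := by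
  have hcu : ∀ j, Continuous (PF (Function.update φ j (φ' j))) := by
    intro j
    apply PF_cont
    intro i
    by_cases hi : i = j
    · subst hi; simpa using hc' i
    · simpa [hi] using hc i
  have hbu : ∀ j x, |PF (Function.update φ j (φ' j)) x| ≤ K ^ (Fintype.card κ) := by
    intro j
    apply PF_bound
    intro i x
    by_cases hi : i = j
    · subst hi; simpa using hb' i x
    · simpa [hi] using hb i x
  rw [steinPi k (fun x => PF φ (ZZ c x))
    (fun x => ∑ j, c j k * PF (Function.update φ j (φ' j)) (ZZ c x)) (K ^ (Fintype.card κ))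
    (∑ j, |c j k| * K ^ (Fintype.card κ))]
  · rw [integral_finsetSum]
    · simp_rw [integral_const_mul]
    · intro j _
      apply Integrable.const_mul
      exact Integrable.of_bound ((hcu j).comp (ZZ_cont c)).aestronglyMeasurable _
        (ae_of_all _ fun x => hbu j _)
  · intro x s
    apply PF_deriv φ φ' h (fun i s => ZZ c (Function.update x k s) i) (fun i => c i k) s
    intro i
    have e : (fun s => ZZ c (Function.update x k s) i) =
        fun s => c i k * s + ∑ l ∈ Finset.univ.erase k, c i l * x l := by
      funext s
      unfold ZZ
      rw [← Finset.add_sum_erase _ _ (Finset.mem_univ k)]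
      simp only [Function.update_self]
      congr 1
      apply Finset.sum_congr rfl
      intro l hl
      rw [Function.update_of_ne (Finset.ne_of_mem_erase hl)]
    rw [e]
    simpa using ((hasDerivAt_id s).const_mul (c i k)).add_const
      (∑ l ∈ Finset.univ.erase k, c i l * x l)
  · intro x; exact PF_bound φ K hb _
  · intro x
    refine (Finset.abs_sum_le_sum_abs _ _).trans (Finset.sum_le_sum fun j _ => ?_)
    rw [abs_mul]
    exact mul_le_mul_of_nonneg_left (hbu j _) (abs_nonneg _)
  · exact ((PF_cont φ hc).comp (ZZ_cont c)).measurable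
  · apply Continuous.measurable
    exact continuous_finsetSum _ fun j _ => ((hcu j).comp (ZZ_cont c)).const_mul _

end
end SBall

open MeasureTheory ProbabilityTheory Real

set_option linter.unusedSectionVars false

namespace SBall

section
variable {κ ι : Type*} [Fintype κ] [DecidableEq κ] [Fintype ι] [DecidableEq ι]

/-- second derivatives of `x ↦ ∏ g (x i)` -/
noncomputable def D2 (g g1 g2 : ℝ → ℝ) (i j : κ) : (κ → ℝ) → ℝ :=
  PF (Function.update (Function.update (fun _ : κ => g) i g1) j
    ((Function.update (fun _ : κ => g1) i g2) j))

lemma D2_nonneg (g g1 g2 : ℝ → ℝ) (hg : ∀ x, 0 ≤ g x) (hg1 : ∀ x, g1 x ≤ 0) (i j : κ)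
    (hij : i ≠ j) (x : κ → ℝ) : 0 ≤ D2 g g1 g2 i j x := by
  unfold D2
  rw [PF_update, Function.update_of_ne hij.symm,
    ← Finset.mul_prod_erase (Finset.univ.erase j) _ (a := i) (by simp [hij]), ← mul_assoc]
  apply mul_nonneg
  · rw [Function.update_self]
    exact mul_nonneg_of_nonpos_of_nonpos (hg1 _) (hg1 _)
  · apply Finset.prod_nonneg
    intro l hl
    rw [Function.update_of_ne (Finset.ne_of_mem_erase hl)]
    exact hg _

noncomputable def rot (a b : κ → ι → ℝ) (θ : ℝ) (i : κ) (k : ι) : ℝ :=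
  cos θ * a i k + sin θ * b i k

lemma rot_deriv (a b : κ → ι → ℝ) (θ : ℝ) (h : ι → ℝ) (i : κ) :
    HasDerivAt (fun θ => ZZ (rot a b θ) h i)
      (ZZ (fun i k => - sin θ * a i k + cos θ * b i k) h i) θ := by
  unfold ZZ rot
  apply HasDerivAt.fun_sum
  intro k _
  exact (((hasDerivAt_cos θ).mul_const _).add ((hasDerivAt_sin θ).mul_const _)).mul_const _

lemma interp_deriv (a b : κ → ι → ℝ) (g g1 g2 : ℝ → ℝ) (K : ℝ)
    (h1 : ∀ x, HasDerivAt g (g1 x) x) (h2 : ∀ x, HasDerivAt g1 (g2 x) x)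
    (hc2 : Continuous g2) (hb : ∀ x, |g x| ≤ K) (hb1 : ∀ x, |g1 x| ≤ K) (hb2 : ∀ x, |g2 x| ≤ K)
    (θ : ℝ) :
    HasDerivAt (fun θ => ∫ h, PF (fun _ => g) (ZZ (rot a b θ) h) ∂(gam ι))
      (∑ i, ∑ j, (∑ k, (- sin θ * a i k + cos θ * b i k) * rot a b θ j k) *
        ∫ h, D2 g g1 g2 i j (ZZ (rot a b θ) h) ∂(gam ι)) θ := by
  have hc : Continuous g := continuous_iff_continuousAt.2 fun x => (h1 x).continuousAt
  have hc1 : Continuous g1 := continuous_iff_continuousAt.2 fun x => (h2 x).continuousAt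
  have hK : 0 ≤ K := (abs_nonneg _).trans (hb 0)
  set D1 : κ → (κ → ℝ) → ℝ := fun i => PF (Function.update (fun _ : κ => g) i g1) with hD1
  have cc : ∀ i j, Continuous (Function.update (fun _ : κ => g) i g1 j) := by
    intro i j
    by_cases hi : j = i
    · subst hi; simpa using hc1
    · simpa [hi] using hc
  have hD1c : ∀ i, Continuous (D1 i) := fun i => PF_cont _ (cc i)
  have bb : ∀ i j x, |Function.update (fun _ : κ => g) i g1 j x| ≤ K := by
    intro i j x
    by_cases hi : j = i
    · subst hi; simpa using hb1 x
    · simpa [hi] using hb x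
  have hD1b : ∀ i x, |D1 i x| ≤ K ^ Fintype.card κ := fun i => PF_bound _ _ (bb i)
  have key := hasDerivAt_integral_of_dominated_loc_of_deriv_le (μ := gam ι) (s := Set.univ)
    (x₀ := θ) (F := fun θ h => PF (fun _ => g) (ZZ (rot a b θ) h))
    (F' := fun θ h => ∑ i, ZZ (fun i k => - sin θ * a i k + cos θ * b i k) h i *
      D1 i (ZZ (rot a b θ) h))
    (bound := fun h => ∑ i, (∑ k, (|a i k| + |b i k|) * |h k|) * K ^ Fintype.card κ)
    Filter.univ_mem ?_ ?_ ?_ ?_ ?_ ?_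
  · refine key.2.congr_deriv ?_
    rw [integral_finsetSum]
    · apply Finset.sum_congr rfl
      intro i _
      have e : ∀ h : ι → ℝ, ZZ (fun i k => - sin θ * a i k + cos θ * b i k) h i *
          D1 i (ZZ (rot a b θ) h) = ∑ k, (- sin θ * a i k + cos θ * b i k) *
            (h k * D1 i (ZZ (rot a b θ) h)) := by
        intro h
        unfold ZZ
        rw [Finset.sum_mul]
        apply Finset.sum_congr rfl
        intros; ring
      simp_rw [e]
      rw [integral_finsetSum]
      · simp_rw [integral_const_mul]
        have : ∀ k, ∫ h, h k * D1 i (ZZ (rot a b θ) h) ∂(gam ι) = 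
            ∑ j, rot a b θ j k * ∫ h, D2 g g1 g2 i j (ZZ (rot a b θ) h) ∂(gam ι) := by
          intro k
          apply ibp (rot a b θ) (Function.update (fun _ : κ => g) i g1)
            (Function.update (fun _ : κ => g1) i g2) K _ (cc i) _ (bb i) _ k
          · intro j x
            by_cases hi : j = i
            · subst hi; simpa using h2 x
            · simpa [hi] using h1 x
          · intro j
            by_cases hi : j = i
            · subst hi; simpa using hc2
            · simpa [hi] using hc1
          · intro j x
            by_cases hi : j = i
            · subst hi; simpa using hb2 x
            · simpa [hi] using hb1 x
        simp_rw [this, Finset.mul_sum, Finset.sum_mul]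
        rw [Finset.sum_comm]
        apply Finset.sum_congr rfl; intro j _
        apply Finset.sum_congr rfl; intro k _
        ring
      · intro k _
        apply Integrable.const_mul
        exact (integrable_coord k).mul_bdd (c := K ^ Fintype.card κ)
          ((hD1c i).comp (ZZ_cont _)).aestronglyMeasurable (ae_of_all _ fun x => hD1b i _)
    · intro i _
      have : Integrable (fun h : ι → ℝ => ZZ (fun i k => - sin θ * a i k + cos θ * b i k) h i)
          (gam ι) := by
        unfold ZZ
        exact integrable_finsetSum _ fun k _ => (integrable_coord k).const_mul _
      exact this.mul_bdd (c := K ^ Fintype.card κ)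
          ((hD1c i).comp (ZZ_cont _)).aestronglyMeasurable (ae_of_all _ fun x => hD1b i _)
  · exact Filter.Eventually.of_forall fun x =>
      ((PF_cont (fun _ : κ => g) fun _ => hc).comp (ZZ_cont _)).aestronglyMeasurable
  · exact Integrable.of_bound ((PF_cont (fun _ : κ => g) fun _ => hc).comp (ZZ_cont _)).aestronglyMeasurable
      (K ^ Fintype.card κ) (ae_of_all _ fun x => PF_bound _ _ (fun _ => hb) _)
  · apply Continuous.aestronglyMeasurable
    refine continuous_finsetSum _ fun i _ => ?_
    exact ((continuous_apply i).comp (ZZ_cont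
      (fun (i : κ) (k : ι) => - sin θ * a i k + cos θ * b i k))).mul ((hD1c i).comp (ZZ_cont _))
  · refine ae_of_all _ fun h x _ => ?_
    refine (norm_sum_le _ _).trans (Finset.sum_le_sum fun i _ => ?_)
    rw [norm_mul]
    refine mul_le_mul ?_ (hD1b i _) (norm_nonneg _) (by positivity)
    unfold ZZ
    refine (norm_sum_le _ _).trans (Finset.sum_le_sum fun k _ => ?_)
    rw [norm_mul, Real.norm_eq_abs, Real.norm_eq_abs]
    refine mul_le_mul_of_nonneg_right ((abs_add_le _ _).trans (add_le_add ?_ ?_)) (abs_nonneg _)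
    · rw [abs_mul, abs_neg]
      exact mul_le_of_le_one_left (abs_nonneg _) (abs_sin_le_one _)
    · rw [abs_mul]
      exact mul_le_of_le_one_left (abs_nonneg _) (abs_cos_le_one _)
  · refine integrable_finsetSum _ fun i _ => Integrable.mul_const ?_ _
    exact integrable_finsetSum _ fun k _ => (integrable_coord k).abs.const_mul _
  · refine ae_of_all _ fun h x _ => ?_
    exact PF_deriv (fun _ => g) (fun _ => g1) (fun _ => h1) (fun i θ => ZZ (rot a b θ) h i)
      (fun i => ZZ (fun i k => - sin x * a i k + cos x * b i k) h i) x
      (fun i => rot_deriv a b x h i)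

lemma interp_mono (a b : κ → ι → ℝ) (g g1 g2 : ℝ → ℝ) (K : ℝ)
    (h1 : ∀ x, HasDerivAt g (g1 x) x) (h2 : ∀ x, HasDerivAt g1 (g2 x) x)
    (hc2 : Continuous g2) (hb : ∀ x, |g x| ≤ K) (hb1 : ∀ x, |g1 x| ≤ K) (hb2 : ∀ x, |g2 x| ≤ K)
    (hg : ∀ x, 0 ≤ g x) (hg1 : ∀ x, g1 x ≤ 0)
    (ho : ∀ i j, ∑ k, a i k * b j k = 0)
    (hdiag : ∀ i, ∑ k, a i k * a i k = ∑ k, b i k * b i k)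
    (hoff : ∀ i j, i ≠ j → ∑ k, a i k * a j k ≤ ∑ k, b i k * b j k) :
    ∫ h, PF (fun _ => g) (ZZ a h) ∂(gam ι) ≤ ∫ h, PF (fun _ => g) (ZZ b h) ∂(gam ι) := by
  have hd := interp_deriv a b g g1 g2 K h1 h2 hc2 hb hb1 hb2
  have hm : MonotoneOn (fun θ => ∫ h, PF (fun _ => g) (ZZ (rot a b θ) h) ∂(gam ι))
      (Set.Icc 0 (π/2)) := by
    apply monotoneOn_of_deriv_nonneg (convex_Icc _ _)
    · exact fun x _ => (hd x).continuousAt.continuousWithinAt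
    · exact fun x _ => (hd x).differentiableAt.differentiableWithinAt
    · intro x hx
      rw [interior_Icc] at hx
      rw [(hd x).deriv]
      apply Finset.sum_nonneg; intro i _
      apply Finset.sum_nonneg; intro j _
      have e : ∑ k, (- sin x * a i k + cos x * b i k) * rot a b x j k =
          sin x * cos x * (∑ k, b i k * b j k - ∑ k, a i k * a j k) := by
        have : ∑ k, (- sin x * a i k + cos x * b i k) * rot a b x j k =
          sin x * cos x * (∑ k, b i k * b j k - ∑ k, a i k * a j k) - 
            sin x ^ 2 * ∑ k, a i k * b j k + cos x ^ 2 * ∑ k, a j k * b i k := by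
          simp only [rot, Finset.mul_sum, ← Finset.sum_sub_distrib, ← Finset.sum_add_distrib]
          apply Finset.sum_congr rfl; intro k _
          ring
        rw [this, ho, ho]; ring
      rw [e]
      by_cases hij : i = j
      · subst hij; rw [hdiag i]; simp
      · apply mul_nonneg
        · apply mul_nonneg
          · apply mul_nonneg
            · exact (sin_pos_of_mem_Ioo ⟨hx.1, by linarith [hx.2, pi_pos]⟩).le
            · exact (cos_pos_of_mem_Ioo ⟨by linarith [hx.1, pi_pos], hx.2⟩).le
          · linarith [hoff i j hij]
        · exact integral_nonneg fun h => D2_nonneg g g1 g2 hg hg1 i j hij _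
  have := hm (Set.left_mem_Icc.2 (by positivity)) (Set.right_mem_Icc.2 (by positivity))
    (by positivity)
  have e0 : rot a b 0 = a := by funext i k; simp [rot]
  have e1 : rot a b (π/2) = b := by funext i k; simp [rot]
  simpa [e0, e1] using this

end
end SBall

open MeasureTheory ProbabilityTheory Real

set_option linter.unusedSectionVars false

namespace SBall

section
variable {κ : Type*} [Fintype κ] [DecidableEq κ]

/-- Gaussian family with given (not nec. symmetric) covariance and unit variances -/
def IsG {Ω : Type*} [MeasurableSpace Ω] (μ : Measure Ω) (X : κ → Ω → ℝ) (R : κ → κ → ℝ) : Prop :=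
  (∀ i, Measurable (X i)) ∧ (∀ i, R i i = 1) ∧
    ∀ a : κ → ℝ, Measure.map (fun ω => ∑ i, a i * X i ω) μ =
        gaussianReal 0 (Real.toNNReal (∑ i, ∑ j, a i * R i j * a j))

lemma second_moment {Ω : Type*} [MeasurableSpace Ω] (μ : Measure Ω) (f : Ω → ℝ)
    (hf : Measurable f) (v : NNReal) (h : μ.map f = gaussianReal 0 v) :
    ∫ ω, f ω ^ 2 ∂μ = v := by
  have h1 : ∫ x, x ^ 2 ∂(gaussianReal 0 v) = v := by
    have := variance_eq_sub (X := id) (μ := gaussianReal 0 v) (memLp_id_gaussianReal 2)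
    rw [variance_id_gaussianReal] at this
    simp at this
    exact this.symm
  rw [← h1, ← h, integral_map hf.aemeasurable (by fun_prop)]

lemma memLp_of_law {Ω : Type*} [MeasurableSpace Ω] (μ : Measure Ω) (f : Ω → ℝ)
    (hf : Measurable f) (v : NNReal) (h : μ.map f = gaussianReal 0 v) : MemLp f 2 μ := by
  have : MemLp id 2 (μ.map f) := by rw [h]; exact memLp_id_gaussianReal 2
  exact (memLp_map_measure_iff (by fun_prop) hf.aemeasurable).1 this

lemma IsG.law {Ω : Type*} [MeasurableSpace Ω] {μ : Measure Ω} {X : κ → Ω → ℝ} {R : κ → κ → ℝ}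
    (h : IsG μ X R) (i : κ) : μ.map (X i) = gaussianReal 0 1 := by
  have := h.2.2 (Pi.single i 1)
  simpa [Pi.single_apply, h.2.1] using this

lemma IsG.gram {Ω : Type*} [MeasurableSpace Ω] {μ : Measure Ω} {X : κ → Ω → ℝ} {R : κ → κ → ℝ}
    (h : IsG μ X R) : ∃ (m : ℕ) (A : κ → Fin m → ℝ),
      ∀ i j, ∑ k, A i k * A j k = (R i j + R j i) / 2 := by
  have hL : ∀ i, MemLp (X i) 2 μ := fun i => memLp_of_law μ _ (h.1 i) _ (h.law i)
  have hi : ∀ i j, Integrable (fun ω => X i ω * X j ω) μ := fun i j => (hL i).integrable_mul (hL j)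
  set c : κ → κ → ℝ := fun i j => ∫ ω, X i ω * X j ω ∂μ with hc
  have hsq : ∀ a : κ → ℝ, ∫ ω, (∑ i, a i * X i ω) ^ 2 ∂μ = ∑ i, ∑ j, a i * c i j * a j := by
    intro a
    have e : ∀ ω, (∑ i, a i * X i ω) ^ 2 = ∑ i, ∑ j, (a i * a j) * (X i ω * X j ω) := by
      intro ω
      rw [sq, Finset.sum_mul_sum]
      apply Finset.sum_congr rfl; intro i _
      apply Finset.sum_congr rfl; intro j _
      ring
    simp_rw [e]
    rw [integral_finsetSum _ fun i _ => integrable_finsetSum _ fun j _ => (hi i j).const_mul _]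
    apply Finset.sum_congr rfl; intro i _
    rw [integral_finsetSum _ fun j _ => (hi i j).const_mul _]
    apply Finset.sum_congr rfl; intro j _
    rw [integral_const_mul]; ring
  have hq : ∀ a : κ → ℝ, ∑ i, ∑ j, a i * c i j * a j = max (∑ i, ∑ j, a i * R i j * a j) 0 := by
    intro a
    rw [← hsq, second_moment μ _ (Finset.measurable_fun_sum _ fun i _ => (h.1 i).const_mul _) _
      (h.2.2 a), Real.coe_toNNReal']
  have hq2 : ∀ (B : κ → κ → ℝ) (i j : κ) (s : ℝ), 
      ∑ k, ∑ l, (Pi.single i 1 + Pi.single j s : κ → ℝ) k * B k l *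
        (Pi.single i 1 + Pi.single j s : κ → ℝ) l =
       B i i + s * (B i j + B j i) + s ^ 2 * B j j := by
    intro B i j s
    simp only [Pi.add_apply, add_mul, mul_add, Finset.sum_add_distrib, Pi.single_apply, ite_mul,
      mul_ite, Finset.sum_ite_eq', Finset.mem_univ, if_true, zero_mul, mul_zero,
      one_mul, mul_one]
    ring
  have hcs : ∀ i j, c i j = c j i := by
    intro i j; simp only [hc]; congr 1; ext ω; ring
  have hcii : ∀ i, c i i = 1 := by
    intro i
    have := second_moment μ _ (h.1 i) _ (h.law i)
    simp only [hc]
    rw [← NNReal.coe_one, ← this]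
    congr 1; ext ω; ring
  have hcR : ∀ i j, c i j = (R i j + R j i) / 2 := by
    intro i j
    rcases le_total 0 (R i j + R j i) with h0 | h0
    · have := hq (Pi.single i 1 + Pi.single j 1)
      rw [hq2, hq2, hcii, hcii, h.2.1, h.2.1, ← hcs i j, max_eq_left (by linarith)] at this
      linarith
    · have := hq (Pi.single i 1 + Pi.single j (-1))
      rw [hq2, hq2, hcii, hcii, h.2.1, h.2.1, ← hcs i j, max_eq_left (by linarith)] at this
      linarith
  have hpsd : (Matrix.of c).PosSemidef := by
    apply Matrix.PosSemidef.of_dotProduct_mulVec_nonneg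
    · ext i j; simp [hcs j i]
    · intro x
      have := hq x
      simp only [dotProduct, Matrix.mulVec, Finset.mul_sum, Matrix.of_apply]
      have h2 : 0 ≤ ∑ i, ∑ j, x i * c i j * x j := by rw [this]; exact le_max_right _ _
      simpa [mul_assoc] using h2
  obtain ⟨m, A, hA⟩ := Matrix.posSemidef_iff_eq_sum_vecMulVec.mp hpsd
  refine ⟨m, fun i k => A k i, fun i j => ?_⟩
  rw [← hcR]
  have := congrFun (congrFun hA i) j
  simp only [Matrix.of_apply, Matrix.sum_apply, Matrix.vecMulVec_apply] at this
  rw [this]; simp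

lemma law_unique {Ω Ω' : Type*} [MeasurableSpace Ω] [MeasurableSpace Ω'] (μ : Measure Ω)
    (ν : Measure Ω') [IsProbabilityMeasure μ] [IsProbabilityMeasure ν] (X : κ → Ω → ℝ)
    (Y : κ → Ω' → ℝ) (hX : ∀ i, Measurable (X i)) (hY : ∀ i, Measurable (Y i))
    (h : ∀ a : κ → ℝ, μ.map (fun ω => ∑ i, a i * X i ω) = ν.map (fun ω => ∑ i, a i * Y i ω)) :
    μ.map (fun ω i => X i ω) = ν.map (fun ω i => Y i ω) := by
  have mX : Measurable (fun ω i => X i ω) := measurable_pi_lambda _ hX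
  have mY : Measurable (fun ω i => Y i ω) := measurable_pi_lambda _ hY
  have := Measure.isProbabilityMeasure_map (μ := μ) mX.aemeasurable
  have := Measure.isProbabilityMeasure_map (μ := ν) mY.aemeasurable
  apply Measure.ext_of_charFunDual
  ext L
  rw [charFunDual_eq_charFun_map_one, charFunDual_eq_charFun_map_one,
    Measure.map_map L.measurable mX, Measure.map_map L.measurable mY]
  have e : ∀ x : κ → ℝ, L x = ∑ i, L (Pi.single i 1) * x i := by
    intro x
    conv_lhs => rw [pi_eq_sum_univ' x]
    rw [map_sum]
    apply Finset.sum_congr rfl; intro i _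
    rw [map_smul, smul_eq_mul, mul_comm]
  have e1 : (L ∘ fun ω i => X i ω) = fun ω => ∑ i, L (Pi.single i 1) * X i ω := by
    funext ω; exact e _
  have e2 : (L ∘ fun ω i => Y i ω) = fun ω => ∑ i, L (Pi.single i 1) * Y i ω := by
    funext ω; exact e _
  rw [e1, e2, h]

lemma sum_indep {β : Type*} [Fintype β] {Ω : β → Type*} [∀ j, MeasurableSpace (Ω j)]
    (μ : ∀ j, Measure (Ω j)) [∀ j, IsProbabilityMeasure (μ j)] (f : ∀ j, Ω j → ℝ)
    (hf : ∀ j, Measurable (f j)) (v : β → NNReal) (h : ∀ j, (μ j).map (f j) = gaussianReal 0 (v j)) :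
    (Measure.pi μ).map (fun ω => ∑ j, f j (ω j)) = gaussianReal 0 (∑ j, v j) := by
  have hm : Measurable (fun ω : ∀ j, Ω j => ∑ j, f j (ω j)) :=
    Finset.measurable_fun_sum _ fun j _ => (hf j).comp (measurable_pi_apply j)
  have := Measure.isProbabilityMeasure_map (μ := Measure.pi μ) hm.aemeasurable
  apply Measure.ext_of_charFun
  ext t
  have hj : ∀ j, ∫ ω, Complex.exp (t * f j ω * Complex.I) ∂(μ j) =
      Complex.exp (- (v j) * t ^ 2 / 2) := by
    intro j
    have : charFun ((μ j).map (f j)) t = charFun (gaussianReal 0 (v j)) t := by rw [h]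
    rw [charFun_gaussianReal, charFun_apply_real,
      integral_map (hf j).aemeasurable (by fun_prop)] at this
    rw [this]; congr 1; simp; ring
  rw [charFun_gaussianReal, charFun_apply_real, integral_map hm.aemeasurable (by fun_prop)]
  have e : ∀ ω : ∀ j, Ω j, Complex.exp (t * (∑ j, f j (ω j) : ℝ) * Complex.I) =
      ∏ j, Complex.exp (t * f j (ω j) * Complex.I) := by
    intro ω
    rw [← Complex.exp_sum]; congr 1
    push_cast
    rw [Finset.mul_sum, Finset.sum_mul]
  simp_rw [e]
  rw [integral_fintype_prod_eq_prod (fun j ω => Complex.exp (t * f j ω * Complex.I))]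
  simp_rw [hj]
  rw [← Complex.exp_sum]; congr 1
  push_cast
  rw [← Finset.sum_div, ← Finset.sum_mul, Finset.sum_neg_distrib]
  ring

lemma gam_law {ι : Type*} [Fintype ι] (c : ι → ℝ) :
    (gam ι).map (fun h => ∑ k, c k * h k) = gaussianReal 0 (Real.toNNReal (∑ k, c k * c k)) := by
  rw [sum_indep (fun _ : ι => gaussianReal 0 1) (fun k x => c k * x)
    (fun k => measurable_id.const_mul _) (fun k => Real.toNNReal (c k * c k))]
  · congr 1
    rw [Real.toNNReal_sum_of_nonneg]
    intro k _; exact mul_self_nonneg _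
  · intro k
    rw [gaussianReal_map_const_mul]
    congr 1
    · simp
    · ext; simp [Real.coe_toNNReal', mul_self_nonneg, sq]

end
end SBall

open MeasureTheory ProbabilityTheory Real

set_option linter.unusedSectionVars false

namespace SBall

section
variable {κ : Type*} [Fintype κ] [DecidableEq κ]

lemma law_ZZ {Ω ι : Type*} [Fintype ι] [DecidableEq ι] [MeasurableSpace Ω] {μ : Measure Ω}
    [IsProbabilityMeasure μ] {X : κ → Ω → ℝ} {R : κ → κ → ℝ} (h : IsG μ X R) (A : κ → ι → ℝ)
    (hA : ∀ i j, ∑ k, A i k * A j k = (R i j + R j i) / 2) :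
    μ.map (fun ω i => X i ω) = (gam ι).map (ZZ A) := by
  apply law_unique μ (gam ι) X (fun i h => ZZ A h i) h.1
  · intro i; exact ((continuous_apply i).comp (ZZ_cont A)).measurable
  · intro a
    rw [h.2.2 a]
    have e : (fun h => ∑ i, a i * ZZ A h i) = fun h : ι → ℝ => ∑ k, (∑ i, a i * A i k) * h k := by
      funext h
      simp only [ZZ, Finset.mul_sum, Finset.sum_mul]
      rw [Finset.sum_comm]
      simp only [mul_assoc]
    rw [e, gam_law]
    congr 2
    have e1 : ∑ k, (∑ i, a i * A i k) * (∑ i, a i * A i k) =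
        ∑ i, ∑ j, a i * (∑ k, A i k * A j k) * a j := by
      simp only [Finset.mul_sum, Finset.sum_mul]
      rw [Finset.sum_comm]
      apply Finset.sum_congr rfl; intro i _
      rw [Finset.sum_comm]
      apply Finset.sum_congr rfl; intro j _
      apply Finset.sum_congr rfl; intro k _
      ring
    rw [e1]
    simp_rw [hA]
    have e2 : ∑ i, ∑ j, a i * R i j * a j = ∑ i, ∑ j, a i * R j i * a j := by
      rw [Finset.sum_comm]
      apply Finset.sum_congr rfl; intro i _
      apply Finset.sum_congr rfl; intro j _
      ring
    have e3 : ∑ i, ∑ j, a i * ((R i j + R j i)/2) * a j =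
        (∑ i, ∑ j, a i * R i j * a j + ∑ i, ∑ j, a i * R j i * a j)/2 := by
      rw [← Finset.sum_add_distrib, Finset.sum_div]
      apply Finset.sum_congr rfl; intro i _
      rw [← Finset.sum_add_distrib, Finset.sum_div]
      apply Finset.sum_congr rfl; intro j _
      ring
    rw [e3, ← e2]; ring

lemma slepian_smooth {Ω Ω' : Type*} [MeasurableSpace Ω] [MeasurableSpace Ω'] (μ : Measure Ω)
    (ν : Measure Ω') [IsProbabilityMeasure μ] [IsProbabilityMeasure ν] (X : κ → Ω → ℝ)
    (Y : κ → Ω' → ℝ) (R T : κ → κ → ℝ) (hX : IsG μ X R) (hY : IsG ν Y T)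
    (hRT : ∀ i j, i ≠ j → R i j ≤ T i j) (g g1 g2 : ℝ → ℝ) (K : ℝ)
    (h1 : ∀ x, HasDerivAt g (g1 x) x) (h2 : ∀ x, HasDerivAt g1 (g2 x) x)
    (hc2 : Continuous g2) (hb : ∀ x, |g x| ≤ K) (hb1 : ∀ x, |g1 x| ≤ K) (hb2 : ∀ x, |g2 x| ≤ K)
    (hg : ∀ x, 0 ≤ g x) (hg1 : ∀ x, g1 x ≤ 0) :
    ∫ ω, ∏ i, g (X i ω) ∂μ ≤ ∫ ω, ∏ i, g (Y i ω) ∂ν := by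
  have hc : Continuous g := continuous_iff_continuousAt.2 fun x => (h1 x).continuousAt
  obtain ⟨m, A, hA⟩ := hX.gram
  obtain ⟨p, B, hB⟩ := hY.gram
  set a : κ → (Fin m ⊕ Fin p) → ℝ := fun i => Sum.elim (A i) (fun _ => 0) with ha
  set b : κ → (Fin m ⊕ Fin p) → ℝ := fun i => Sum.elim (fun _ => 0) (B i) with hb'
  have hA' : ∀ i j, ∑ k, a i k * a j k = (R i j + R j i) / 2 := by
    intro i j; simp [ha, hA]
  have hB' : ∀ i j, ∑ k, b i k * b j k = (T i j + T j i) / 2 := by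
    intro i j; simp [hb', hB]
  have key := interp_mono a b g g1 g2 K h1 h2 hc2 hb hb1 hb2 hg hg1
    (by intro i j; simp [ha, hb'])
    (by intro i; rw [hA', hB', hX.2.1, hY.2.1])
    (by
      intro i j hij; rw [hA', hB']
      have := hRT i j hij
      have := hRT j i hij.symm
      linarith)
  have lX := law_ZZ hX a hA'
  have lY := law_ZZ hY b hB'
  have hPF : Continuous (PF (fun _ : κ => g)) := PF_cont _ fun _ => hc
  rw [← integral_map (φ := ZZ a) (f := PF (fun _ : κ => g)) (ZZ_cont a).measurable.aemeasurable
      hPF.aestronglyMeasurable,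
    ← integral_map (φ := ZZ b) (f := PF (fun _ : κ => g)) (ZZ_cont b).measurable.aemeasurable
      hPF.aestronglyMeasurable, ← lX, ← lY,
    integral_map (measurable_pi_lambda _ hX.1).aemeasurable hPF.aestronglyMeasurable,
    integral_map (measurable_pi_lambda _ hY.1).aemeasurable hPF.aestronglyMeasurable] at key
  exact key

lemma lim_prob {Ω : Type*} [MeasurableSpace Ω] (μ : Measure Ω)
    [IsProbabilityMeasure μ] (X : κ → Ω → ℝ) (R : κ → κ → ℝ) (hX : IsG μ X R) (t : ℝ) :
    Filter.Tendsto (fun m : ℕ => ∫ ω, ∏ i, sigmoid (m * (t - X i ω)) ∂μ) Filter.atTop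
      (nhds (μ.real {ω | ∀ i, X i ω ≤ t})) := by
  have hms : MeasurableSet {ω | ∀ i, X i ω ≤ t} := by
    rw [Set.ofPred_forall]
    exact MeasurableSet.iInter fun i => measurableSet_le (hX.1 i) measurable_const
  rw [← integral_indicator_one hms]
  apply tendsto_integral_of_dominated_convergence (fun _ => 1)
  · intro m
    apply Measurable.aestronglyMeasurable
    refine Finset.measurable_fun_prod _ fun i _ => ?_
    exact continuous_sigmoid.measurable.comp ((measurable_const.sub (hX.1 i)).const_mul _)
  · simp
  · intro m
    refine ae_of_all _ fun ω => ?_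
    rw [norm_prod]
    refine Finset.prod_le_one (fun _ _ => norm_nonneg _) fun i _ => ?_
    rw [Real.norm_of_nonneg (sigmoid_nonneg _)]
    exact sigmoid_le_one _
  · have hne : ∀ᵐ ω ∂μ, ∀ i, X i ω ≠ t := by
      rw [ae_all_iff]
      intro i
      have hna : NullSingletonClass (gaussianReal 0 1) :=
        nullSingletonClass_gaussianReal one_ne_zero
      have : (μ.map (X i)) {t} = 0 := by
        rw [hX.law i]; exact measure_singleton t
      rw [Measure.map_apply (hX.1 i) (measurableSet_singleton t)] at this
      rw [ae_iff]
      simpa [Set.preimage] using this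
    filter_upwards [hne] with ω hω
    have : (Set.indicator {ω | ∀ i, X i ω ≤ t} 1 ω : ℝ) = ∏ i, (if X i ω ≤ t then 1 else 0) := by
      classical
      rw [Set.indicator_apply, Finset.prod_ite_zero]
      simp
    rw [this]
    apply tendsto_finsetProd
    intro i _
    have hnat : Filter.Tendsto (fun m : ℕ => (m:ℝ)) Filter.atTop Filter.atTop :=
      tendsto_natCast_atTop_atTop
    rcases lt_or_gt_of_ne (hω i) with h | h
    · rw [if_pos h.le]
      exact tendsto_sigmoid_atTop.comp (hnat.atTop_mul_const (by linarith))
    · rw [if_neg (by linarith)]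
      exact tendsto_sigmoid_atBot.comp (hnat.atTop_mul_const_of_neg (by linarith))

theorem slepian {Ω Ω' : Type*} [MeasurableSpace Ω] [MeasurableSpace Ω'] (μ : Measure Ω)
    (ν : Measure Ω') [IsProbabilityMeasure μ] [IsProbabilityMeasure ν] (X : κ → Ω → ℝ)
    (Y : κ → Ω' → ℝ) (R T : κ → κ → ℝ) (hX : IsG μ X R) (hY : IsG ν Y T)
    (hRT : ∀ i j, i ≠ j → R i j ≤ T i j) (t : ℝ) :
    μ {ω | ∀ i, X i ω ≤ t} ≤ ν {ω | ∀ i, Y i ω ≤ t} := by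
  have : μ.real {ω | ∀ i, X i ω ≤ t} ≤ ν.real {ω | ∀ i, Y i ω ≤ t} := by
    refine le_of_tendsto_of_tendsto' (lim_prob μ X R hX t) (lim_prob ν Y T hY t) fun m => ?_
    set g : ℝ → ℝ := fun x => sigmoid (m * (t - x)) with hg
    have g01 : ∀ x, 0 ≤ g x ∧ g x ≤ 1 := fun x => ⟨sigmoid_nonneg _, sigmoid_le_one _⟩
    have m0 : (0:ℝ) ≤ m := Nat.cast_nonneg m
    have hd : ∀ x, HasDerivAt g (-m * (g x * (1 - g x))) x := by
      intro x
      have := (hasDerivAt_sigmoid (m * (t - x))).comp x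
        (((hasDerivAt_id x).const_sub t).const_mul (m:ℝ))
      exact this.congr_deriv (by simp [hg]; ring)
    have hgc : Continuous g := continuous_iff_continuousAt.2 fun x => (hd x).continuousAt
    have q1 : ∀ x, |g x * (1 - g x)| ≤ 1 := fun x => by
      obtain ⟨h0, h1⟩ := g01 x
      rw [abs_le]; constructor <;> nlinarith
    have q2 : ∀ x, |1 - 2 * g x| ≤ 1 := fun x => by
      obtain ⟨h0, h1⟩ := g01 x
      rw [abs_le]; constructor <;> nlinarith
    refine slepian_smooth μ ν X Y R T hX hY hRT g (fun x => -m * (g x * (1 - g x)))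
      (fun x => m ^ 2 * ((g x * (1 - g x)) * (1 - 2 * g x))) (1 + m + m ^ 2) hd ?_ (by fun_prop)
      ?_ ?_ ?_ (fun x => (g01 x).1) ?_
    · intro x
      have := ((hd x).mul ((hd x).const_sub 1)).const_mul (-(m:ℝ))
      exact this.congr_deriv (by ring)
    · intro x
      obtain ⟨h0, h1⟩ := g01 x
      rw [abs_of_nonneg h0]; nlinarith
    · intro x
      rw [abs_mul, abs_neg, abs_of_nonneg m0]
      nlinarith [q1 x]
    · intro x
      rw [abs_mul, abs_of_nonneg (sq_nonneg _), abs_mul]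
      have := mul_le_mul (q1 x) (q2 x) (abs_nonneg _) zero_le_one
      nlinarith [sq_nonneg (m:ℝ)]
    · intro x
      obtain ⟨h0, h1⟩ := g01 x
      have : 0 ≤ g x * (1 - g x) := mul_nonneg h0 (by linarith)
      nlinarith
  rwa [measureReal_def, measureReal_def, ENNReal.toReal_le_toReal (measure_ne_top _ _)
    (measure_ne_top _ _)] at this

end
end SBall

open MeasureTheory ProbabilityTheory Real

set_option linter.unusedSectionVars false

namespace SBall

noncomputable abbrev mu1 (n : ℕ) : Measure (ℝ × (Fin n → ℝ)) := (gaussianReal 0 1).prod (gam (Fin n))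

noncomputable def YY (n : ℕ) (ρ : ℝ) (i : Fin n) (ω : ℝ × (Fin n → ℝ)) : ℝ :=
  √ρ * ω.1 + √(1-ρ) * ω.2 i

noncomputable def TT (n : ℕ) (ρ : ℝ) (i j : Fin n) : ℝ := if i = j then 1 else ρ

lemma YY_meas (n : ℕ) (ρ : ℝ) (i : Fin n) : Measurable (YY n ρ i) := by
  unfold YY
  have : Measurable (fun ω : ℝ × (Fin n → ℝ) => ω.2 i) := (measurable_pi_apply i).comp measurable_snd
  exact (measurable_fst.const_mul _).add (this.const_mul _)

lemma TT_quad (n : ℕ) (ρ : ℝ) (c : Fin n → ℝ) :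
    ∑ i, ∑ j, c i * TT n ρ i j * c j = ρ * (∑ i, c i) ^ 2 + (1 - ρ) * ∑ i, c i * c i := by
  have : ∀ i j, c i * TT n ρ i j * c j = ρ * (c i * c j) + (if i = j then (1-ρ) * (c i * c j) else 0) := by
    intro i j
    unfold TT
    split_ifs <;> ring
  simp_rw [this, Finset.sum_add_distrib]
  rw [sq, Finset.sum_mul_sum]
  simp [Finset.mul_sum]

lemma TT_quad_nonneg (n : ℕ) (ρ : ℝ) (h0 : 0 < ρ) (h1 : ρ < 1) (c : Fin n → ℝ) :
    0 ≤ ∑ i, ∑ j, c i * TT n ρ i j * c j := by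
  rw [TT_quad]
  have : 0 ≤ ∑ i, c i * c i := Finset.sum_nonneg fun i _ => mul_self_nonneg _
  have := mul_nonneg (sub_nonneg.2 h1.le) this
  positivity

lemma map_mul_law (k : ℝ) : (gaussianReal 0 1).map (fun z => k * z) =
    gaussianReal 0 (Real.toNNReal (k * k)) := by
  rw [gaussianReal_map_const_mul]
  congr 1
  · simp
  · ext; simp [Real.coe_toNNReal', mul_self_nonneg, sq]

lemma YY_law (n : ℕ) (ρ : ℝ) (h0 : 0 < ρ) (h1 : ρ < 1) (c : Fin n → ℝ) :
    (mu1 n).map (fun ω => ∑ i, c i * YY n ρ i ω) =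
      gaussianReal 0 (Real.toNNReal (∑ i, ∑ j, c i * TT n ρ i j * c j)) := by
  have e : (fun ω => ∑ i, c i * YY n ρ i ω) = (fun p : ℝ × ℝ => p.1 + p.2) ∘
      (Prod.map (fun z => (√ρ * ∑ i, c i) * z) (fun ξ : Fin n → ℝ => ∑ i, (√(1-ρ) * c i) * ξ i)) := by
    funext ω
    simp only [YY, Function.comp, Prod.map, mul_add, Finset.sum_add_distrib, Finset.mul_sum,
      Finset.sum_mul]
    congr 1 <;> (apply Finset.sum_congr rfl; intros; ring)
  have m1 : Measurable (fun z : ℝ => (√ρ * ∑ i, c i) * z) := measurable_id.const_mul _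
  have m2 : Measurable (fun ξ : Fin n → ℝ => ∑ i, (√(1-ρ) * c i) * ξ i) := by fun_prop
  rw [e, ← Measure.map_map (by fun_prop) (m1.prodMap m2), ← Measure.map_prod_map _ _ m1 m2, gam_law,
    map_mul_law]
  have := gaussianReal_conv_gaussianReal (m₁ := 0) (m₂ := 0)
    (v₁ := Real.toNNReal ((√ρ * ∑ i, c i) * (√ρ * ∑ i, c i)))
    (v₂ := (Real.toNNReal (∑ k, √(1-ρ) * c k * (√(1-ρ) * c k))))
  rw [Measure.conv] at this
  refine this.trans ?_
  congr 1
  · simp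
  · have e2 : ∑ k, √(1-ρ) * c k * (√(1-ρ) * c k) = (1-ρ) * ∑ k, c k * c k := by
      rw [Finset.mul_sum]
      apply Finset.sum_congr rfl; intro k _
      have := Real.mul_self_sqrt (sub_nonneg.2 h1.le)
      linear_combination (c k * c k) * this
    have h3 : 0 ≤ (1-ρ) * ∑ k, c k * c k := 
      mul_nonneg (sub_nonneg.2 h1.le) (Finset.sum_nonneg fun i _ => mul_self_nonneg _)
    rw [e2, TT_quad]
    ext
    rw [Real.coe_toNNReal _ (by positivity)]
    rw [NNReal.coe_add, Real.coe_toNNReal _ h3, Real.coe_toNNReal _ (mul_self_nonneg _)]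
    have := Real.mul_self_sqrt h0.le
    linear_combination (∑ i, c i) ^ 2 * this

lemma YY_isG (n : ℕ) (ρ : ℝ) (h0 : 0 < ρ) (h1 : ρ < 1) : IsG (mu1 n) (YY n ρ) (TT n ρ) :=
  ⟨YY_meas n ρ, fun i => by simp [TT], YY_law n ρ h0 h1⟩

lemma YY2_isG (n : ℕ) (ρ : ℝ) (h0 : 0 < ρ) (h1 : ρ < 1) :
    IsG (Measure.pi (fun _ : Bool => mu1 n)) (fun (p : Bool × Fin n) ω => YY n ρ p.2 (ω p.1))
      (fun p q => if p.1 = q.1 then TT n ρ p.2 q.2 else 0) := by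
  refine ⟨fun p => (YY_meas n ρ p.2).comp (measurable_pi_apply p.1), fun p => by simp [TT], ?_⟩
  intro a
  have := sum_indep (fun _ : Bool => mu1 n) (fun s ω => ∑ i, a (s, i) * YY n ρ i ω)
    (fun s => Finset.measurable_fun_sum _ fun i _ => (YY_meas n ρ i).const_mul _)
    _ (fun s => YY_law n ρ h0 h1 (fun i => a (s, i)))
  have e : (fun ω : Bool → ℝ × (Fin n → ℝ) => ∑ p : Bool × Fin n, a p * YY n ρ p.2 (ω p.1)) =
      fun ω => ∑ s, ∑ i, a (s, i) * YY n ρ i (ω s) := by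
    funext ω
    rw [Fintype.sum_prod_type]
  rw [e, this, ← Real.toNNReal_sum_of_nonneg (fun s _ => TT_quad_nonneg n ρ h0 h1 _)]
  congr 2
  simp only [Fintype.sum_prod_type]
  simp

noncomputable def pr (n : ℕ) (ρ t : ℝ) : ENNReal := mu1 n {ω | ∀ i, YY n ρ i ω ≤ t}

lemma pr_eq (n : ℕ) (ρ : ℝ) (h1 : ρ < 1) (t : ℝ) :
    pr n ρ t = ∫⁻ z, (gaussianReal 0 1 (Set.Iic ((t - √ρ * z) / √(1-ρ)))) ^ n ∂(gaussianReal 0 1) := by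
  have hs : 0 < √(1-ρ) := Real.sqrt_pos.2 (by linarith)
  unfold pr
  have hms : MeasurableSet {ω | ∀ i, YY n ρ i ω ≤ t} := by
    rw [Set.ofPred_forall]
    exact MeasurableSet.iInter fun i => measurableSet_le (YY_meas n ρ i) measurable_const
  rw [Measure.prod_apply hms]
  congr 1
  funext z
  have : Prod.mk z ⁻¹' {ω | ∀ i, YY n ρ i ω ≤ t} =
      Set.univ.pi (fun _ : Fin n => Set.Iic ((t - √ρ * z) / √(1-ρ))) := by
    ext ξ
    simp only [Set.mem_preimage, Set.mem_ofPred_eq, Set.mem_pi, Set.mem_univ, true_imp_iff,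
      Set.mem_Iic, YY]
    refine forall_congr' fun i => ?_
    rw [le_div_iff₀ hs]
    constructor <;> intro h <;> linarith
  rw [this, Measure.pi_pi]
  simp

lemma one_sided {Ω : Type*} [MeasurableSpace Ω] (μ : Measure Ω) [IsProbabilityMeasure μ] (n : ℕ)
    (ρ : ℝ) (h0 : 0 < ρ) (h1 : ρ < 1) (X : Fin n → Ω → ℝ) (R : Fin n → Fin n → ℝ)
    (hX : IsG μ X R) (hR : ∀ i j, i ≠ j → R i j ≤ ρ) (t : ℝ) :
    μ {ω | ∀ i, X i ω ≤ t} ≤ pr n ρ t :=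
  slepian μ (mu1 n) X (YY n ρ) R (TT n ρ) hX (YY_isG n ρ h0 h1)
    (fun i j hij => by simpa [TT, hij] using hR i j hij) t

lemma two_sided {Ω : Type*} [MeasurableSpace Ω] (μ : Measure Ω) [IsProbabilityMeasure μ] (n : ℕ)
    (ρ : ℝ) (h0 : 0 < ρ) (h1 : ρ < 1) (X : Fin n → Ω → ℝ) (R : Fin n → Fin n → ℝ)
    (hX : IsG μ X R) (hR : ∀ i j, i ≠ j → 0 ≤ R i j ∧ R i j ≤ ρ) (t : ℝ) :
    μ {ω | ∀ i, |X i ω| ≤ t} ≤ pr n ρ t ^ 2 := by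
  set sg : Bool → ℝ := fun s => if s then 1 else -1 with hsg
  have hX' : IsG μ (fun (p : Bool × Fin n) ω => sg p.1 * X p.2 ω)
      (fun p q => sg p.1 * sg q.1 * R p.2 q.2) := by
    refine ⟨fun p => (hX.1 p.2).const_mul _, ?_, ?_⟩
    · rintro ⟨s, i⟩
      cases s <;> simp [hsg, hX.2.1]
    · intro a
      have := hX.2.2 (fun i => ∑ s, a (s, i) * sg s)
      have e : (fun ω => ∑ p : Bool × Fin n, a p * (sg p.1 * X p.2 ω)) =
          fun ω => ∑ i, (∑ s, a (s, i) * sg s) * X i ω := by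
        funext ω
        rw [Fintype.sum_prod_type, Finset.sum_comm]
        simp only [Finset.sum_mul, mul_assoc]
      rw [e, this]
      congr 2
      simp only [Fintype.sum_prod_type, Fintype.sum_bool, ← Finset.sum_add_distrib]
      apply Finset.sum_congr rfl; intro i _
      apply Finset.sum_congr rfl; intro j _
      ring
  have := slepian μ _ _ _ _ _ hX' (YY2_isG n ρ h0 h1) ?_ t
  · refine (measure_mono ?_).trans (this.trans ?_)
    · intro ω hω p
      have := abs_le.1 (hω p.2)
      obtain ⟨s, i⟩ := p
      cases s
      · simp [hsg] at this ⊢; linarith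
      · simp [hsg] at this ⊢; linarith
    · have e : {ω : Bool → ℝ × (Fin n → ℝ) | ∀ p : Bool × Fin n, YY n ρ p.2 (ω p.1) ≤ t} =
          Set.univ.pi (fun _ : Bool => {ω | ∀ i, YY n ρ i ω ≤ t}) := by
        ext ω
        simp
      rw [e, Measure.pi_pi]
      simp [pr, sq]
  · rintro ⟨s, i⟩ ⟨s', j⟩ hne
    by_cases hs : s = s'
    · subst hs
      have hij : i ≠ j := fun h => hne (by rw [h])
      have := (hR i j hij).2
      cases s <;> simpa [hsg, TT, hij] using this
    · have hss : sg s * sg s' = -1 := by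
        cases s <;> cases s' <;> simp [hsg] at hs ⊢
      have hRn : 0 ≤ R i j := by
        by_cases hij : i = j
        · subst hij; rw [hX.2.1]; exact zero_le_one
        · exact (hR i j hij).1
      simp only [hs, if_false, hss]
      linarith

end SBall

open MeasureTheory ProbabilityTheory Real

set_option linter.unusedSectionVars false

namespace SBall

noncomputable def kap : ℝ := (√(2 * π))⁻¹ * exp (-3/2)

lemma kap_pos : 0 < kap := by unfold kap; positivity

noncomputable def Ph (w : ℝ) : ℝ := (gaussianReal 0 1).real (Set.Iic w)

lemma Ph_nonneg (w : ℝ) : 0 ≤ Ph w := measureReal_nonneg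
lemma Ph_le_one (w : ℝ) : Ph w ≤ 1 := measureReal_le_one
lemma Ph_mono {a b : ℝ} (h : a ≤ b) : Ph a ≤ Ph b :=
  measureReal_mono (Set.Iic_subset_Iic.2 h)

lemma Ph_tail (w : ℝ) (hw : 0 ≤ w) : Ph w ≤ 1 - kap / (1 + w) * exp (-w^2/2) := by
  set s := Set.Ioc w (w + 1/(1+w)) with hs
  have hdis : Disjoint (Set.Iic w) s := by
    rw [Set.disjoint_left]; intro x hx hx'; exact absurd hx'.1 (not_lt.2 hx)
  have h1 : Ph w + (gaussianReal 0 1).real s ≤ 1 := by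
    unfold Ph
    rw [← measureReal_union hdis measurableSet_Ioc]
    exact measureReal_le_one
  have h2 : kap / (1 + w) * exp (-w^2/2) ≤ (gaussianReal 0 1).real s := by
    rw [measureReal_def, gaussianReal_apply _ one_ne_zero]
    rw [← ENNReal.ofReal_le_iff_le_toReal]
    · have e : kap / (1 + w) * exp (-w^2/2) = (kap * exp (-w^2/2)) * (1/(1+w)) := by ring
      have : ENNReal.ofReal (kap / (1 + w) * exp (-w^2/2)) =
          ∫⁻ _ in s, ENNReal.ofReal (kap * exp (-w^2/2)) := by
        rw [setLIntegral_const, hs, Real.volume_Ioc, e, ENNReal.ofReal_mul (by have := kap_pos; positivity)]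
        congr 2; ring
      rw [this]
      apply setLIntegral_mono' measurableSet_Ioc
      intro x hx
      unfold gaussianPDF gaussianPDFReal
      apply ENNReal.ofReal_le_ofReal
      unfold kap
      rw [mul_assoc, ← exp_add]
      simp only [NNReal.coe_one, mul_one, sub_zero]
      gcongr
      have hp : 0 < 1 + w := by linarith
      obtain ⟨ha, hb⟩ := hx
      have : (1 + w) * (1/(1+w)) = 1 := by field_simp
      set h := 1/(1+w)
      have hh : 0 ≤ h := by positivity
      have hh1 : h ≤ 1 := by nlinarith
      have hwh : w * h ≤ 1 := by nlinarith
      have : x^2 ≤ (w+h)^2 := by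
        apply pow_le_pow_left₀ (by linarith) hb
      nlinarith
    · rw [← gaussianReal_apply _ one_ne_zero]; exact measure_ne_top _ _
  linarith

lemma Ph_pow (w q : ℝ) (h : Ph w ≤ 1 - q) (n : ℕ) : Ph w ^ n ≤ exp (-(n * q)) := by
  have : Ph w ≤ exp (-q) := h.trans (by have := add_one_le_exp (-q); linarith)
  calc Ph w ^ n ≤ exp (-q) ^ n := pow_le_pow_left₀ (Ph_nonneg _) this _
    _ = _ := by rw [← exp_nat_mul]; congr 1; ring

lemma exp_exp_bound (k p : ℝ) (hk : 0 < k) : ∃ M : ℝ, 1 ≤ M ∧ ∀ v, 0 ≤ v →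
    exp (-(k * exp (v/4))) ≤ M * exp (-(p * v)) := by
  obtain ⟨N, hN⟩ := exists_nat_ge (4 * p)
  refine ⟨max 1 (N.factorial / k^N), le_max_left _ _, fun v hv => ?_⟩
  have h1 := Real.pow_div_factorial_le_exp (k * exp (v/4)) (by positivity) N
  rw [exp_neg]
  have h2 : (exp (k * exp (v/4)))⁻¹ ≤ ((k * exp (v/4))^N / N.factorial)⁻¹ := by
    apply inv_anti₀ (by positivity) h1
  refine h2.trans ?_
  have : ((k * exp (v/4))^N / N.factorial)⁻¹ = N.factorial / k^N * exp (-(N * (v/4))) := by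
    rw [mul_pow, ← exp_nat_mul, exp_neg]; field_simp
  rw [this]
  have h3 : exp (-(N * (v/4))) ≤ exp (-(p * v)) := by
    apply exp_le_exp.2
    nlinarith
  exact mul_le_mul (le_max_right _ _) h3 (exp_pos _).le (by positivity)

set_option maxHeartbeats 1000000 in
lemma core (c δ : ℝ) (hc : 0 < c) (h0 : 0 < δ) (h1 : δ < 1) :
    ∃ M b u0 : ℝ, 1 ≤ M ∧ 0 < b ∧ 2 ≤ u0 ∧ ∀ (n : ℕ) (u : ℝ), u0 ≤ u → (n:ℝ) = exp (u^2/2) →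
      ∀ y, exp (-y^2/2) * Ph (δ * u + y / c) ^ n ≤ exp (-(n * kap)) * exp (-y^2/2) +
        M * exp (-(c * ((1-δ)*u - log u / u))^2/2) *
          exp (-(b * u * |y - c * ((1-δ)*u - log u / u)|)) := by
  have hk := kap_pos
  obtain ⟨M, hM1, hM⟩ := exp_exp_bound (kap/2 * exp (-1/2)) (c^2+1) (by positivity)
  have hd : 0 < 1 - δ := by linarith
  refine ⟨M, min (1/c) (c*(1-δ)/2), 2/(1-δ), hM1, by positivity, ?_, ?_⟩
  · rw [le_div_iff₀ hd]; linarith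
  intro n u hu hn y
  set b := min (1/c) (c*(1-δ)/2) with hb
  have hbp : 0 < b := by positivity
  have hu' : 2 ≤ (1-δ)*u := by rw [div_le_iff₀ hd] at hu; linarith
  have hu2 : 2 ≤ u := by nlinarith
  have hup : 0 < u := by linarith
  set l := log u / u with hl
  have hlu : l * u = log u := by rw [hl]; field_simp
  have hlog0 : 0 ≤ log u := log_nonneg (by linarith)
  have hl0 : 0 ≤ l := by positivity
  have hl1 : l ≤ 1 := by
    rw [hl, div_le_one hup]; have := log_le_sub_one_of_pos hup; linarith
  set z0 := c * ((1-δ)*u - l) with hz0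
  have hz0l : c*(1-δ)/2*u ≤ z0 := by rw [hz0]; nlinarith
  have hz0u : z0 ≤ c * u := by rw [hz0]; nlinarith [mul_pos hc (mul_pos h0 hup), mul_nonneg hc.le hl0]
  have hn0 : (0:ℝ) ≤ n := Nat.cast_nonneg _
  have A0 : 0 ≤ exp (-(n * kap)) * exp (-y^2/2) := by positivity
  have B0 : 0 ≤ M * exp (-z0^2/2) * exp (-(b * u * |y - z0|)) := by positivity
  rcases le_total z0 y with hy | hy
  · have : exp (-y^2/2) * Ph (δ * u + y / c) ^ n ≤ M * exp (-z0^2/2) * exp (-(b * u * |y - z0|)) := by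
      calc _ ≤ exp (-y^2/2) * 1 := by
            gcongr; exact pow_le_one₀ (Ph_nonneg _) (Ph_le_one _)
        _ ≤ 1 * (exp (-z0^2/2) * exp (-(b * u * |y - z0|))) := by
            rw [mul_one, one_mul, ← exp_add]
            gcongr
            rw [abs_of_nonneg (by linarith)]
            have h3 : b * u ≤ z0 := le_trans (by gcongr; exact min_le_right _ _) hz0l
            nlinarith [sq_nonneg (y - z0), mul_le_mul_of_nonneg_right h3 (sub_nonneg.2 hy)]
        _ ≤ _ := by rw [mul_assoc M]; exact mul_le_mul_of_nonneg_right hM1 (by positivity)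
    linarith
  · rcases le_total 0 (δ * u + y / c) with hw | hw
    · set w := δ * u + y / c with hwd
      set w0 := u - l with hw0
      set v := u * (w0 - w) with hv
      have hyv : z0 - y = c * (w0 - w) := by
        rw [hz0, hw0, hwd]; field_simp; ring
      have hww : w ≤ w0 := by nlinarith
      have hv0 : 0 ≤ v := mul_nonneg hup.le (by linarith)
      have e1 : Ph w ^ n ≤ exp (-(kap/2 * exp (-1/2) * exp (v/4))) := by
        refine (Ph_pow w _ (Ph_tail w hw) n).trans ?_
        apply exp_le_exp.2
        apply neg_le_neg
        have h1w : 1 + w ≤ 2 * u := by linarith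
        have h5 : kap / (2*u) ≤ kap / (1+w) := by gcongr
        have h6 : exp (u^2/2) * exp (-w^2/2) ≥ u * exp (-1/2) * exp (v/4) := by
          nth_rewrite 2 [← exp_log hup]
          rw [← exp_add, ← exp_add, ← exp_add]
          apply exp_le_exp.2
          have hw0h : u / 2 ≤ w0 := by linarith
          have hu2' : u^2 - w0^2 ≥ 2 * log u - 1 := by
            have e : u^2 - w0^2 = 2 * (l * u) - l^2 := by rw [hw0]; ring
            have : l^2 ≤ 1 := pow_le_one₀ hl0 hl1
            rw [e, hlu]; linarith
          have : w0^2 - w^2 ≥ v/2 := by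
            have : (w0 - w) * (w0 + w) ≥ (w0 - w) * (u/2) :=
              mul_le_mul_of_nonneg_left (by linarith) (by linarith)
            have e : v = u * (w0 - w) := rfl
            linarith
          linarith
        rw [hn]
        calc kap/2 * exp (-1/2) * exp (v/4) = kap/(2*u) * (u * exp (-1/2) * exp (v/4)) := by
              field_simp
          _ ≤ kap/(2*u) * (exp (u^2/2) * exp (-w^2/2)) := by gcongr
          _ ≤ kap/(1+w) * (exp (u^2/2) * exp (-w^2/2)) := by gcongr
          _ = _ := by ring
      have e2 := hM v hv0
      have e3 : exp (-y^2/2) ≤ exp (-z0^2/2) * exp (c^2*v) := by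
        rw [← exp_add]; gcongr
        have : y = z0 - c * (w0 - w) := by linarith
        rw [this, hv]
        nlinarith [sq_nonneg (c * (w0-w)), mul_le_mul_of_nonneg_right hz0u (mul_nonneg hc.le (sub_nonneg.2 hww))]
      have : exp (-y^2/2) * Ph w ^ n ≤ M * exp (-z0^2/2) * exp (-(b * u * |y - z0|)) := by
        calc _ ≤ (exp (-z0^2/2) * exp (c^2*v)) * (M * exp (-((c^2+1) * v))) := by
              gcongr; exacts [pow_nonneg (Ph_nonneg _) _, e1.trans e2]
          _ = M * exp (-z0^2/2) * exp (-v) := by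
              have : exp (-v) = exp (c^2*v) * exp (-((c^2+1) * v)) := by
                rw [← exp_add]; congr 1; ring
              rw [this]; ring
          _ ≤ _ := by
              gcongr
              rw [abs_sub_comm, abs_of_nonneg (by linarith), hyv]
              have : b * c ≤ 1 := by
                calc b * c ≤ 1/c * c := by gcongr; exact min_le_left _ _
                  _ = 1 := by field_simp
              calc b * u * (c * (w0 - w)) = (b * c) * v := by rw [hv]; ring
                _ ≤ 1 * v := by gcongr
                _ = v := one_mul _
      linarith
    · have h3 : Ph (δ * u + y / c) ≤ 1 - kap := (Ph_mono hw).trans (by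
        have := Ph_tail 0 le_rfl; simpa using this)
      have := Ph_pow _ _ h3 n
      have : exp (-y^2/2) * Ph (δ * u + y / c) ^ n ≤ exp (-(n * kap)) * exp (-y^2/2) := by
        rw [mul_comm]; gcongr
      linarith

end SBall

open MeasureTheory ProbabilityTheory Real

set_option linter.unusedSectionVars false

namespace SBall

lemma lint_abs (a : ℝ) (ha : 0 < a) (s : ℝ) :
    ∫⁻ z, ENNReal.ofReal (exp (-(a * |z + s|))) ≤ ENNReal.ofReal (2 / a) := by
  rw [lintegral_add_right_eq_self (fun z => ENNReal.ofReal (exp (-(a * |z|)))) s]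
  rw [← lintegral_add_compl _ (measurableSet_Iic (a := (0:ℝ))), Set.compl_Iic]
  have e1 : ∫⁻ z in Set.Iic (0:ℝ), ENNReal.ofReal (exp (-(a * |z|))) = ENNReal.ofReal (1/a) := by
    rw [setLIntegral_congr_fun (g := fun z => ENNReal.ofReal (exp (a * z))) measurableSet_Iic,
      ← ofReal_integral_eq_lintegral_ofReal (integrableOn_exp_mul_Iic ha 0)
        (ae_of_all _ fun _ => (exp_pos _).le), integral_exp_mul_Iic ha]
    · simp
    · intro z hz
      simp only
      rw [abs_of_nonpos hz]; congr 2; ring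
  have e2 : ∫⁻ z in Set.Ioi (0:ℝ), ENNReal.ofReal (exp (-(a * |z|))) = ENNReal.ofReal (1/a) := by
    rw [setLIntegral_congr_fun (g := fun z => ENNReal.ofReal (exp (-a * z))) measurableSet_Ioi,
      ← ofReal_integral_eq_lintegral_ofReal (integrableOn_exp_mul_Ioi (neg_lt_zero.2 ha) 0)
        (ae_of_all _ fun _ => (exp_pos _).le), integral_exp_mul_Ioi (neg_lt_zero.2 ha)]
    · simp
    · intro z hz
      simp only
      rw [abs_of_pos hz]; congr 2; ring
  rw [e1, e2, ← ENNReal.ofReal_add (by positivity) (by positivity)]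
  apply ENNReal.ofReal_le_ofReal
  apply le_of_eq; ring

lemma pr_eq2 (n : ℕ) (ρ : ℝ) (h1 : ρ < 1) (t : ℝ) :
    pr n ρ t = ∫⁻ z, ENNReal.ofReal ((√(2*π))⁻¹ * (exp (-z^2/2) *
      Ph ((t - √ρ * z) / √(1-ρ)) ^ n)) := by
  rw [pr_eq n ρ h1, gaussianReal_of_var_ne_zero 0 one_ne_zero]
  rw [lintegral_withDensity_eq_lintegral_mul₀ (by fun_prop)]
  · apply lintegral_congr
    intro z
    simp only [Pi.mul_apply]
    rw [← mul_assoc, ENNReal.ofReal_mul (by positivity), ENNReal.ofReal_pow (Ph_nonneg _)]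
    congr 1
    · unfold gaussianPDF gaussianPDFReal; simp
    · unfold Ph
      rw [ofReal_measureReal, gaussianReal_of_var_ne_zero 0 one_ne_zero]
  · rw [← gaussianReal_of_var_ne_zero 0 one_ne_zero]
    have : Antitone (fun z => gaussianReal 0 1 (Set.Iic ((t - √ρ * z) / √(1-ρ)))) := by
      intro x y hxy
      apply measure_mono
      apply Set.Iic_subset_Iic.2
      gcongr
    exact (this.measurable.pow_const _).aemeasurable

lemma pr_bound (ρ δ : ℝ) (h0 : 0 < ρ) (h1 : ρ < 1) (d0 : 0 < δ) (d1 : δ < 1) :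
    ∃ M u0 : ℝ, 0 < M ∧ 2 ≤ u0 ∧ ∀ (n : ℕ) (u : ℝ), u0 ≤ u → (n:ℝ) = exp (u^2/2) →
      pr n ρ (δ * √(2 * (1-ρ) * log n)) ≤ ENNReal.ofReal (exp (-(n * kap)) +
        M * exp (-(√(1-ρ)/√ρ * ((1-δ)*u - log u / u))^2/2) / u) := by
  have hs : 0 < √(1-ρ) := Real.sqrt_pos.2 (by linarith)
  have hr : 0 < √ρ := Real.sqrt_pos.2 h0
  obtain ⟨M, b, u0, hM, hb, hu0, H⟩ := core (√(1-ρ)/√ρ) δ (by positivity) d0 d1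
  refine ⟨M * (2/b), u0, by positivity, hu0, fun n u hu hn => ?_⟩
  set c := √(1-ρ)/√ρ with hc
  set z0 := c * ((1-δ)*u - log u / u) with hz0
  have hup : 0 < u := by linarith
  have ht : √(2 * (1-ρ) * log n) = √(1-ρ) * u := by
    rw [hn, log_exp, show 2 * (1-ρ) * (u^2/2) = (1-ρ) * u^2 by ring, sqrt_mul (by linarith),
      sqrt_sq hup.le]
  rw [pr_eq2 n ρ h1, ht]
  have hsq : (√(2*π))⁻¹ ≤ 1 := by
    apply inv_le_one_of_one_le₀
    rw [Real.one_le_sqrt]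
    have := Real.pi_gt_three; linarith
  calc _ ≤ ∫⁻ z, (ENNReal.ofReal (exp (-(n * kap))) * gaussianPDF 0 1 z +
        ENNReal.ofReal (M * exp (-z0^2/2)) * ENNReal.ofReal (exp (-(b * u * |z + z0|)))) := by
        apply lintegral_mono
        intro z
        simp only
        have e : (δ * (√(1-ρ) * u) - √ρ * z) / √(1-ρ) = δ * u + (-z) / c := by
          rw [hc]; field_simp; ring
        have := H n u hu hn (-z)
        rw [e]
        rw [show |(-z) - z0| = |z + z0| by rw [← abs_neg]; congr 1; ring, neg_sq] at this
        unfold gaussianPDF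
        rw [← ENNReal.ofReal_mul (by positivity), ← ENNReal.ofReal_mul (by positivity),
          ← ENNReal.ofReal_add (by have := gaussianPDFReal_nonneg 0 1 z; positivity) (by positivity)]
        apply ENNReal.ofReal_le_ofReal
        have e3 : gaussianPDFReal 0 1 z = (√(2*π))⁻¹ * exp (-z^2/2) := by
          unfold gaussianPDFReal; simp
        rw [e3]
        calc _ ≤ (√(2*π))⁻¹ * (exp (-(n * kap)) * exp (-z^2/2) +
              M * exp (-z0^2/2) * exp (-(b * u * |z + z0|))) := by gcongr
          _ ≤ exp (-(n * kap)) * ((√(2*π))⁻¹ * exp (-z^2/2)) +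
              1 * (M * exp (-z0^2/2) * exp (-(b * u * |z + z0|))) := by
              rw [mul_add]
              apply add_le_add
              · apply le_of_eq; ring
              · exact mul_le_mul_of_nonneg_right hsq (by positivity)
          _ = _ := by ring
    _ = ENNReal.ofReal (exp (-(n * kap))) * 1 +
        ENNReal.ofReal (M * exp (-z0^2/2)) * ∫⁻ z, ENNReal.ofReal (exp (-(b * u * |z + z0|))) := by
        rw [lintegral_add_left (by fun_prop), lintegral_const_mul _ (by fun_prop),
          lintegral_const_mul _ (by fun_prop), lintegral_gaussianPDF_eq_one 0 one_ne_zero]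
    _ ≤ ENNReal.ofReal (exp (-(n * kap))) * 1 +
        ENNReal.ofReal (M * exp (-z0^2/2)) * ENNReal.ofReal (2/(b*u)) := by
        gcongr
        exact lint_abs _ (by positivity) _
    _ = _ := by
        rw [mul_one, ← ENNReal.ofReal_mul (by positivity),
          ← ENNReal.ofReal_add (by positivity) (by positivity)]
        congr 2
        field_simp

lemma exp_small (k α β : ℝ) (hk : 0 < k) (hβ : 0 < β) : ∃ K : ℝ, 0 < K ∧
    ∀ n : ℕ, 2 ≤ n → 1 ≤ log n → exp (-(n * k)) ≤ K * ((n:ℝ)^(-α) * log n ^ ((β-1)/2)) := by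
  obtain ⟨N, hN⟩ := exists_nat_ge (α+1)
  refine ⟨N.factorial / k^N, by positivity, fun n hn hL => ?_⟩
  have hn1 : (1:ℝ) ≤ n := by exact_mod_cast (by omega : 1 ≤ n)
  have hnp : (0:ℝ) < n := by linarith
  have hp := Real.pow_div_factorial_le_exp (n * k) (by positivity) N
  have h2 : exp (-(n*k)) ≤ N.factorial / k^N * ((n:ℝ)^N)⁻¹ := by
    rw [exp_neg]
    calc _ ≤ ((n * k)^N / (N.factorial:ℝ))⁻¹ := inv_anti₀ (by positivity) hp
      _ = _ := by rw [mul_pow]; field_simp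
  refine h2.trans ?_
  gcongr
  have h3 : ((n:ℝ)^N)⁻¹ ≤ (n:ℝ)^(-α) * (n:ℝ)^(-1:ℝ) := by
    rw [← rpow_natCast, ← rpow_neg hnp.le, ← rpow_add hnp]
    apply rpow_le_rpow_of_exponent_le hn1
    linarith
  refine h3.trans ?_
  gcongr
  have hLn : log n ≤ n := (log_le_sub_one_of_pos hnp).trans (by linarith)
  calc (n:ℝ)^(-1:ℝ) ≤ (log n)^(-1:ℝ) := rpow_le_rpow_of_nonpos (by linarith) hLn (by norm_num)
    _ ≤ _ := rpow_le_rpow_of_exponent_le hL (by linarith)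

lemma main_bound (ρ δ : ℝ) (h0 : 0 < ρ) (h1 : ρ < 1) (d0 : 0 < δ) (d1 : δ < 1) :
    ∃ C : ℝ, 0 < C ∧ ∀ n : ℕ, 2 ≤ n → pr n ρ (δ * √(2 * (1-ρ) * log n)) ≤
      ENNReal.ofReal (C * (n:ℝ)^(-((1-ρ)*(1-δ)^2/ρ)) * log n ^ (((1-ρ)*(1-δ)/ρ - 1)/2)) := by
  obtain ⟨M, u0, hM, hu0, H⟩ := pr_bound ρ δ h0 h1 d0 d1
  set α := (1-ρ)*(1-δ)^2/ρ with hα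
  set β := (1-ρ)*(1-δ)/ρ with hβ
  have hβ0 : 0 < β := div_pos (mul_pos (by linarith) (by linarith)) h0
  obtain ⟨K, hK, HK⟩ := exp_small kap α β kap_pos hβ0
  set B : ℕ → ℝ := fun n => (n:ℝ)^(-α) * log n ^ ((β-1)/2) with hB
  have hBn : ∀ n, 0 ≤ B n := fun n =>
    mul_nonneg (rpow_nonneg (Nat.cast_nonneg _) _) (rpow_nonneg (log_natCast_nonneg _) _)
  set n0 := ⌈exp (u0^2/2)⌉₊
  set C2 := ∑ k ∈ Finset.range n0, 1 / B k with hC2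
  have hC20 : 0 ≤ C2 := Finset.sum_nonneg fun k _ => div_nonneg zero_le_one (hBn k)
  set C1 := K + M * exp ((β-1)/2 * log 2) with hC1
  have hC10 : 0 < C1 := by positivity
  refine ⟨C1 + C2, by positivity, fun n hn => ?_⟩
  have hnR : (2:ℝ) ≤ n := by exact_mod_cast hn
  have hL : 0 < log n := log_pos (by linarith)
  have hBp : 0 < B n := mul_pos (rpow_pos_of_pos (by linarith) _) (rpow_pos_of_pos hL _)
  have eB : (C1 + C2) * (n:ℝ)^(-α) * log n ^ ((β-1)/2) = (C1 + C2) * B n := by rw [mul_assoc]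
  rw [eB]
  rcases lt_or_ge n n0 with hlt | hge
  · calc _ ≤ (1 : ENNReal) := by unfold pr; exact prob_le_one
      _ = ENNReal.ofReal 1 := by simp
      _ ≤ _ := by
        apply ENNReal.ofReal_le_ofReal
        have : 1 / B n ≤ C2 := Finset.single_le_sum (f := fun k => 1 / B k)
          (fun k _ => div_nonneg zero_le_one (hBn k)) (Finset.mem_range.2 hlt)
        rw [div_le_iff₀ hBp] at this
        nlinarith
  · have hexp : exp (u0^2/2) ≤ n := (Nat.le_ceil _).trans (by exact_mod_cast hge)
    have hlog : u0^2/2 ≤ log n := (le_log_iff_exp_le (by linarith)).2 hexp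
    set u := √(2 * log n) with hu
    have hu2 : u^2 = 2 * log n := sq_sqrt (by positivity)
    have huu : u0 ≤ u := by
      apply le_sqrt_of_sq_le; linarith
    have hup : 0 < u := by linarith
    have hnu : (n:ℝ) = exp (u^2/2) := by
      rw [hu2, mul_div_cancel_left₀ _ two_ne_zero, exp_log (by linarith)]
    refine (H n u huu hnu).trans ?_
    apply ENNReal.ofReal_le_ofReal
    have b1 := HK n hn (by nlinarith)
    have hlu : log u = (log 2 + log (log n)) / 2 := by
      rw [hu, log_sqrt (by positivity), log_mul two_ne_zero hL.ne']
    have eBn : B n = exp (-α * (u^2/2) + (β-1)/2 * (2 * log u - log 2)) := by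
      simp only [hB]
      rw [rpow_def_of_pos (by linarith), rpow_def_of_pos hL, ← exp_add]
      congr 1
      rw [hu2, hlu]; ring
    have hc2 : (√(1-ρ)/√ρ)^2 = (1-ρ)/ρ := by
      rw [div_pow, sq_sqrt (by linarith), sq_sqrt h0.le]
    have b2 : M * exp (-(√(1-ρ)/√ρ * ((1-δ)*u - log u / u))^2/2) / u ≤
        M * exp ((β-1)/2 * log 2) * B n := by
      rw [mul_div_assoc, mul_assoc]
      gcongr
      rw [eBn, ← exp_add]
      nth_rewrite 4 [← exp_log hup]
      rw [← exp_sub]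
      apply exp_le_exp.2
      rw [mul_pow, hc2]
      have hcp : 0 < (1-ρ)/ρ := div_pos (by linarith) h0
      have e1 : ((1-δ)*u - log u / u)^2 = (1-δ)^2*u^2 - 2*(1-δ)*log u + (log u/u)^2 := by
        field_simp
        ring
      have eα : α = (1-ρ)/ρ * (1-δ)^2 := by rw [hα]; ring
      have eβ : β = (1-ρ)/ρ * (1-δ) := by rw [hβ]; ring
      rw [e1, eα, eβ]
      have := mul_nonneg hcp.le (sq_nonneg (log u / u))
      linarith
    calc _ ≤ K * B n + M * exp ((β-1)/2 * log 2) * B n := add_le_add b1 b2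
      _ = C1 * B n := by rw [hC1]; ring
      _ ≤ _ := by gcongr; linarith

end SBall

/-- The constant `C` can be taken to be the same constant as in the one-sided
lower-tail bound: we assert the existence of a single `C > 0` that works
simultaneously for the one-sided bound (under `R i j ≤ ρ₀`) and for the
small-ball bound with `C ^ 2` (under `0 ≤ R i j ≤ ρ₀`). -/
theorem small_ball_upper_bound_nonneg_corr (δ₀ ρ₀ : ℝ)
    (hδ : δ₀ ∈ Set.Ioo (0 : ℝ) 1) (hρ : ρ₀ ∈ Set.Ioo (0 : ℝ) 1) :
    ∃ C : ℝ, 0 < C ∧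
      (∀ (Ω : Type) [MeasureSpace Ω], IsProbabilityMeasure (ℙ : Measure Ω) →
        ∀ (n : ℕ), 2 ≤ n →
          ∀ (X : Fin n → Ω → ℝ) (R : Matrix (Fin n) (Fin n) ℝ),
            IsCenteredGaussianVec X R →
            (∀ i j, i ≠ j → R i j ≤ ρ₀) →
            (ℙ : Measure Ω) {ω | (⨆ i, X i ω)
                ≤ δ₀ * Real.sqrt (2 * (1 - ρ₀) * Real.log n)}
              ≤ ENNReal.ofReal
                  (C * (n : ℝ) ^ (-((1 - ρ₀) * (1 - δ₀) ^ 2 / ρ₀))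
                    * Real.log n ^ (((1 - ρ₀) * (1 - δ₀) / ρ₀ - 1) / 2))) ∧
      (∀ (Ω : Type) [MeasureSpace Ω], IsProbabilityMeasure (ℙ : Measure Ω) →
        ∀ (n : ℕ), 2 ≤ n →
          ∀ (X : Fin n → Ω → ℝ) (R : Matrix (Fin n) (Fin n) ℝ),
            IsCenteredGaussianVec X R →
            (∀ i j, i ≠ j → 0 ≤ R i j ∧ R i j ≤ ρ₀) →
            (ℙ : Measure Ω) {ω | (⨆ i, |X i ω|)
                ≤ δ₀ * Real.sqrt (2 * (1 - ρ₀) * Real.log n)}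
              ≤ ENNReal.ofReal
                  (C ^ 2 * (n : ℝ) ^ (-(2 * ((1 - ρ₀) * (1 - δ₀) ^ 2 / ρ₀)))
                    * Real.log n ^ ((1 - ρ₀) * (1 - δ₀) / ρ₀ - 1))) := by
  obtain ⟨C, hC, H⟩ := SBall.main_bound ρ₀ δ₀ hρ.1 hρ.2 hδ.1 hδ.2
  refine ⟨C, hC, ?_, ?_⟩
  · intro Ω _ hP n hn X R hX hR
    refine le_trans (measure_mono ?_) ((SBall.one_sided (ℙ : Measure Ω) n ρ₀ hρ.1 hρ.2 X R hX hR
      _).trans (H n hn))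
    intro ω hω i
    exact (le_ciSup (Set.finite_range fun i => X i ω).bddAbove i).trans hω
  · intro Ω _ hP n hn X R hX hR
    refine le_trans (measure_mono ?_) ((SBall.two_sided (ℙ : Measure Ω) n ρ₀ hρ.1 hρ.2 X R hX hR
      (δ₀ * Real.sqrt (2 * (1 - ρ₀) * Real.log n))).trans ?_)
    · intro ω hω i
      exact (le_ciSup (Set.finite_range fun i => |X i ω|).bddAbove i).trans hω
    · refine (pow_le_pow_left₀ zero_le (H n hn) 2).trans ?_
      have hnR : (2:ℝ) ≤ n := by exact_mod_cast hn
      have hn0 : (0:ℝ) < n := by linarith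
      have hL : 0 < Real.log n := Real.log_pos (by linarith)
      rw [← ENNReal.ofReal_pow (by positivity)]
      apply ENNReal.ofReal_le_ofReal
      apply le_of_eq
      rw [mul_pow, mul_pow, ← Real.rpow_natCast ((n:ℝ) ^ _) 2, ← Real.rpow_mul hn0.le,
        ← Real.rpow_natCast (Real.log n ^ _) 2, ← Real.rpow_mul hL.le]
      congr 3
      · push_cast; ring
      · push_cast; ring
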